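/- Let m ∈ ℕ, let α > m−1, and let n ≥ m. Let y_1,…,y_m ∈ ℂ list the roots of L_m^{(−α−1)} with multiplicity, i.e., L_m^{(−α−1)}(X) = ((−1)^m/m!)·∏_{j=1}^m (X−y_j), and let z_1,…,z_{n−m} ∈ ℂ list the roots of L_{n−m}^{(α+1)} with multiplicity similarly. Set Y_j = y_j for 1 ≤ j ≤ m and Y_{m+j} = z_j for 1 ≤ j ≤ n−m. For x ∈ ℂ let M(x) be the (n+1)×(n+1) matrix whose j-th row, for 1 ≤ j ≤ n, is (1, Y_j, Y_j², …, Y_j^n), and whose last row is (E_0(x), 1!·E_1(x), 2!·E_2(x), …, n!·E_n(x)). Then for every x ∈ ℂ, m!·(n−m)!·(∏_{1≤i<j≤n}(Y_j−Y_i))·L^{II,(α)}_{m,n}(x) = (−1)^{n+1}·(α+n+1−2m)·det M(x); moreover the points Y_1,…,Y_n are pairwise distinct, so the Vandermonde factor is nonzero. -/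

import Mathlib

open Finset

/-- Generalized binomial coefficient `C(t, j) = t(t-1)⋯(t-j+1)/j!`. -/
noncomputable def genBinom (t : ℝ) (j : ℕ) : ℝ :=
  (∏ i ∈ Finset.range j, (t - i)) / (Nat.factorial j)

/-- Generalized Laguerre polynomial `L_n^{(α)}(x)` evaluated at complex `x`,
with the convention `L_n^{(α)} = 0` for negative integer index `n`. -/
noncomputable def laguerreC (α : ℝ) (n : ℤ) (x : ℂ) : ℂ :=
  if 0 ≤ n then
    ∑ k ∈ Finset.range (n.toNat + 1),
      ((-1 : ℂ) ^ k / (Nat.factorial k)) * (genBinom ((n : ℝ) + α) (n.toNat - k) : ℂ) * x ^ k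
  else 0

/-- Type-II exceptional `X_m`-Laguerre polynomial (complex variable). -/
noncomputable def XLagIIC (m : ℕ) (α : ℝ) (n : ℕ) (x : ℂ) : ℂ :=
  x * laguerreC (-α - 1) (m : ℤ) x * laguerreC (α + 2) ((n : ℤ) - m - 1) x
    + ((m : ℂ) - (α : ℂ) - 1) * laguerreC (-α - 2) (m : ℤ) x * laguerreC (α + 1) ((n : ℤ) - m) x

/-- Partial sums of the exponential series: `E_k(x) = ∑_{j=0}^k x^j/j!`. -/
noncomputable def expPartial (k : ℕ) (x : ℂ) : ℂ :=
  ∑ j ∈ Finset.range (k + 1), x ^ j / (Nat.factorial j)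

/-!
Put `p = L_m^{(-α-1)}` and `q = L_{n-m}^{(α+1)}`. The contiguity relation for `L_m^{(-α-2)}` turns
the exceptional polynomial into `G = x (p' q - p q') - (α + 1) p q`, and Laguerre's equations for
`p` and `q` collapse `G - G'` to `-(α + n + 1 - 2m) p q`. Hence
`G = -(α + n + 1 - 2m) (1 - D)⁻¹ (p q)`, where `(1 - D)⁻¹ = ∑ Dⁱ` (`Polynomial.sumIDeriv`) sends
`x^k` to `k! E_k`. On the other side, replace the last column of `M(x)` by the combination of the
columns whose coefficients are those of `P = ∏ (X - Y_j)`: the determinant does not change, and of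
the new column only the last entry, `(1 - D)⁻¹ P` at `x`, survives. So `det M(x)` is this value
times the Vandermonde determinant, and `p q` is a constant multiple of `P`.

Laguerre's equation makes every nonzero root simple. For parameters above `-1` and non-real `z`, the
three-term recurrence gives `Im (L_{k+1}(z) conj (L_k(z)))` the sign of `-Im z`, so the roots of `q`
are real; they are positive because `q(-x)` has positive coefficients. For `α > m - 1` all
coefficients of `p` have the sign `(-1)^m`, so `p` has no root in `[0, ∞)` and shares none with `q`.
-/

section Laguerre

open Polynomial

theorem isCoprime_of_forall_root_eval_ne_zero {k : Type*} [Field k] [IsAlgClosed k] {p q : k[X]}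
    (h : ∀ r, p.eval r = 0 → q.eval r ≠ 0) : IsCoprime p q := by
  rw [isCoprime_iff_aeval_ne_zero_of_isAlgClosed k k]
  simpa only [coe_aeval_eq_eval, ne_eq, or_iff_not_imp_left, not_not] using h

variable {K : Type*} [Field K] [CharZero K]

theorem choose_eq_prod_div_factorial (t : K) (j : ℕ) :
    Ring.choose t j = (∏ i ∈ range j, (t - i)) / j.factorial := by
  rw [Ring.choose_eq_smul, descPochhammer_smeval_eq_ascPochhammer,
    ascPochhammer_smeval_eq_eval, ← descPochhammer_eval_eq_ascPochhammer,
    descPochhammer_eval_eq_prod_range, smul_eq_mul, div_eq_inv_mul]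

theorem genBinom_eq_choose (t : ℝ) (j : ℕ) : genBinom t j = Ring.choose t j :=
  (choose_eq_prod_div_factorial t j).symm

theorem succ_mul_choose_succ (t : K) (j : ℕ) :
    ((j : K) + 1) * Ring.choose t (j + 1) = t * Ring.choose (t - 1) j := by
  simpa using Ring.choose_smul_choose t (Nat.le_add_left 1 j)

/-- The generalized Laguerre polynomial `L_n^{(a)}` as a formal polynomial. -/
noncomputable def laguerre (a : K) (n : ℕ) : K[X] :=
  ∑ k ∈ range (n + 1), monomial k ((-1) ^ k / k.factorial * Ring.choose (n + a) (n - k))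

theorem coeff_laguerre (a : K) {n k : ℕ} (hk : k ≤ n) :
    (laguerre a n).coeff k = (-1) ^ k / k.factorial * Ring.choose (n + a) (n - k) := by
  simp [laguerre, coeff_monomial, hk]

theorem coeff_laguerre_of_lt (a : K) {n k : ℕ} (hk : n < k) : (laguerre a n).coeff k = 0 := by
  simp [laguerre, coeff_monomial, hk]

theorem eval_laguerre (a : K) (n : ℕ) (x : K) :
    (laguerre a n).eval x =
      ∑ k ∈ range (n + 1), (-1) ^ k / k.factorial * Ring.choose (n + a) (n - k) * x ^ k := by
  simp [laguerre, eval_finsetSum]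

theorem laguerre_zero (a : K) : laguerre a 0 = 1 := by
  simp [laguerre]

theorem laguerre_one (a : K) : laguerre a 1 = C (1 + a) - X := by
  ext k
  rcases k with _ | _ | k <;>
    simp [laguerre, sum_range_succ, coeff_monomial, coeff_X, coeff_C, coeff_one]

theorem map_laguerre {L : Type*} [Field L] [CharZero L] (f : K →+* L) (a : K) (n : ℕ) :
    (laguerre a n).map f = laguerre (f a) n := by
  simp [laguerre, Polynomial.map_sum, Ring.map_choose]

theorem laguerreC_natCast (a : ℝ) (n : ℕ) (x : ℂ) :
    laguerreC a n x = (laguerre (a : ℂ) n).eval x := by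
  have choose_ofReal (t : ℝ) (j : ℕ) : ((genBinom t j : ℝ) : ℂ) = Ring.choose (t : ℂ) j := by
    rw [genBinom_eq_choose]
    exact Ring.map_choose Complex.ofRealHom t j
  simp [laguerreC, eval_laguerre, choose_ofReal]

theorem derivative_laguerre_succ (a : K) (n : ℕ) :
    derivative (laguerre a (n + 1)) = -laguerre (a + 1) n := by
  ext k
  rw [coeff_derivative, coeff_neg]
  rcases le_or_gt k n with hk | hk
  · rw [coeff_laguerre a (Nat.add_le_add_right hk 1), coeff_laguerre (a + 1) hk, Nat.factorial_succ,
      Nat.add_sub_add_right, show ((n + 1 : ℕ) : K) + a = n + (a + 1) by push_cast; ring]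
    have hk₀ : (k : K) + 1 ≠ 0 := Nat.cast_add_one_ne_zero k
    push_cast
    field_simp
    ring
  · rw [coeff_laguerre_of_lt a (by lia), coeff_laguerre_of_lt (a + 1) hk, zero_mul, neg_zero]

theorem laguerre_add_one_succ_sub (a : K) (n : ℕ) :
    laguerre (a + 1) (n + 1) - laguerre (a + 1) n = laguerre a (n + 1) := by
  ext k
  rw [coeff_sub]
  rcases lt_trichotomy k (n + 1) with hk | rfl | hk
  · have pascal := Ring.choose_succ_succ (n + (a + 1)) (n - k)
    rw [coeff_laguerre _ hk.le, coeff_laguerre _ hk.le, coeff_laguerre _ (Nat.le_of_lt_succ hk),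
      Nat.succ_sub (Nat.le_of_lt_succ hk)]
    push_cast at pascal ⊢
    rw [show (n : K) + 1 + (a + 1) = n + (a + 1) + 1 by ring,
      show (n : K) + 1 + a = n + (a + 1) by ring, pascal]
    ring
  · simp [coeff_laguerre, coeff_laguerre_of_lt]
  · rw [coeff_laguerre_of_lt _ hk, coeff_laguerre_of_lt _ (by lia), coeff_laguerre_of_lt _ hk,
      sub_zero]

theorem succ_mul_coeff_laguerre_succ (a : K) (n k : ℕ) :
    ((n : K) + 1 - k) * (laguerre a (n + 1)).coeff k = (n + 1 + a) * (laguerre a n).coeff k := by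
  rcases lt_trichotomy k (n + 1) with hk | rfl | hk
  · have hkn : k ≤ n := Nat.le_of_lt_succ hk
    have absorb := succ_mul_choose_succ ((n : K) + 1 + a) (n - k)
    rw [coeff_laguerre _ hk.le, coeff_laguerre _ hkn, Nat.succ_sub hkn]
    rw [Nat.cast_sub hkn, show (n : K) + 1 + a - 1 = n + a by ring] at absorb
    push_cast
    linear_combination (-1) ^ k / (k.factorial : K) * absorb
  · simp [coeff_laguerre_of_lt]
  · rw [coeff_laguerre_of_lt _ hk, coeff_laguerre_of_lt _ (by lia), mul_zero, mul_zero]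

theorem succ_mul_laguerre_succ (a : K) (n : ℕ) :
    C ((n : K) + 1) * laguerre a (n + 1) = C ((n : K) + 1 + a) * laguerre a n
      - X * laguerre (a + 1) n := by
  suffices h : C ((n : K) + 1) * laguerre a (n + 1) - X * derivative (laguerre a (n + 1)) =
      C ((n : K) + 1 + a) * laguerre a n by
    rw [derivative_laguerre_succ] at h
    linear_combination h
  ext k
  have h := succ_mul_coeff_laguerre_succ a n k
  cases k with
  | zero => simpa using h
  | succ k =>
    rw [coeff_sub, coeff_C_mul, coeff_C_mul, coeff_X_mul, coeff_derivative, ← h]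
    push_cast
    ring

theorem laguerre_three_term (a : K) (n : ℕ) :
    C ((n : K) + 2) * laguerre a (n + 2) =
      (C (2 * (n : K) + 3 + a) - X) * laguerre a (n + 1) - C ((n : K) + 1 + a) * laguerre a n := by
  have recur₁ := succ_mul_laguerre_succ a (n + 1)
  have recur₀ := succ_mul_laguerre_succ a n
  have contig := laguerre_add_one_succ_sub a n
  simp only [Nat.cast_add, Nat.cast_one, C_add, C_mul, C_1, C_ofNat] at recur₁ recur₀ ⊢
  linear_combination recur₁ - recur₀ - X * contig

theorem add_mul_laguerre_sub_one (a : K) (n : ℕ) :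
    C ((n : K) + a) * laguerre (a - 1) n =
      X * derivative (laguerre a n) + C a * laguerre a n := by
  cases n with
  | zero => simp [laguerre_zero]
  | succ n =>
    have recur := succ_mul_laguerre_succ a n
    have contig := laguerre_add_one_succ_sub (a - 1) n
    rw [sub_add_cancel] at contig
    rw [derivative_laguerre_succ, ← contig]
    simp only [Nat.cast_add, Nat.cast_one, C_add, C_1] at recur ⊢
    linear_combination recur

theorem laguerre_ode (a : K) (n : ℕ) :
    X * derivative (derivative (laguerre a n)) + (C (a + 1) - X) * derivative (laguerre a n)
      + C (n : K) * laguerre a n = 0 := by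
  cases n with
  | zero => simp [laguerre_zero]
  | succ n =>
    have recur := succ_mul_laguerre_succ a n
    have lower := add_mul_laguerre_sub_one (a + 1) n
    rw [add_sub_cancel_right] at lower
    rw [derivative_laguerre_succ, derivative_neg]
    simp only [Nat.cast_add, Nat.cast_one, C_add, C_1] at recur lower ⊢
    linear_combination recur + lower

theorem eval_derivative_laguerre_ne_zero (n : ℕ) (a : K) {r : K} (hr : r ≠ 0)
    (hroot : (laguerre a n).eval r = 0) : (derivative (laguerre a n)).eval r ≠ 0 := by
  induction n generalizing a with
  | zero => simp [laguerre_zero] at hroot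
  | succ n ih =>
    intro hder
    have hder₂ : (derivative (derivative (laguerre a (n + 1)))).eval r = 0 := by
      simpa [hroot, hder, hr] using congrArg (eval r) (laguerre_ode a (n + 1))
    simp only [derivative_laguerre_succ, derivative_neg, eval_neg, neg_eq_zero] at hder hder₂
    exact ih (a + 1) hder hder₂

theorem separable_laguerre [IsAlgClosed K] {a : K} {n : ℕ} (h₀ : (laguerre a n).eval 0 ≠ 0) :
    (laguerre a n).Separable :=
  isCoprime_of_forall_root_eval_ne_zero fun _ hr =>
    eval_derivative_laguerre_ne_zero n a (fun hr₀ => h₀ (hr₀ ▸ hr)) hr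

section LocationOfZeros

section Ordered

variable {F : Type*} [Field F] [LinearOrder F] [IsStrictOrderedRing F]

theorem choose_pos_of_lt {t : F} {j : ℕ} (h : (j : F) < t + 1) : 0 < Ring.choose t j := by
  rw [choose_eq_prod_div_factorial, ← descPochhammer_eval_eq_prod_range]
  have := descPochhammer_pos (sub_lt_iff_lt_add.mpr h)
  positivity

theorem neg_one_pow_mul_choose_pos {t : F} (h : t < 0) (j : ℕ) :
    0 < (-1) ^ j * Ring.choose t j := by
  have reflect := Ring.choose_neg (-t) j
  have hpos : 0 < Ring.choose (-t + j - 1) j := choose_pos_of_lt (by linarith)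
  rw [neg_neg, Units.smul_def, Int.coe_negOnePow_natCast, zsmul_eq_mul] at reflect
  rw [reflect, ← mul_assoc]
  push_cast
  rwa [← mul_pow, neg_one_mul, neg_neg, one_pow, one_mul]

theorem laguerre_eval_pos_of_nonpos {a : F} (ha : -1 < a) (n : ℕ) {r : F} (hr : r ≤ 0) :
    0 < (laguerre a n).eval r := by
  have choose_pos (k : ℕ) (hk : k ∈ range (n + 1)) : 0 < Ring.choose (n + a) (n - k) :=
    choose_pos_of_lt <| by
      rw [Nat.cast_sub (mem_range_succ_iff.mp hk)]
      linarith [(Nat.cast_nonneg k : (0 : F) ≤ k)]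
  have term_eq (k : ℕ) : (-1) ^ k / (k.factorial : F) * Ring.choose (n + a) (n - k) * r ^ k =
      (-r) ^ k / k.factorial * Ring.choose (n + a) (n - k) := by
    rw [neg_pow r]; ring
  simp only [eval_laguerre, term_eq]
  refine sum_pos' (fun k hk => ?_) ⟨0, by simp, ?_⟩
  · exact mul_nonneg (div_nonneg (pow_nonneg (neg_nonneg.mpr hr) k) (Nat.cast_nonneg _))
      (choose_pos k hk).le
  · simpa using choose_pos 0 (by simp)

theorem neg_one_pow_mul_laguerre_eval_pos {a : F} {n : ℕ} (ha : n + a < 0) {r : F} (hr : 0 ≤ r) :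
    0 < (-1) ^ n * (laguerre a n).eval r := by
  have choose_pos (k : ℕ) : 0 < (-1) ^ (n - k) * Ring.choose (n + a) (n - k) :=
    neg_one_pow_mul_choose_pos ha (n - k)
  have term_eq (k : ℕ) (hk : k ∈ range (n + 1)) :
      (-1) ^ n * ((-1) ^ k / (k.factorial : F) * Ring.choose (n + a) (n - k) * r ^ k) =
        r ^ k / k.factorial * ((-1) ^ (n - k) * Ring.choose (n + a) (n - k)) := by
    have hsign : (-1 : F) ^ n * (-1) ^ k = (-1) ^ (n - k) := by
      rw [← pow_sub_mul_pow (-1 : F) (mem_range_succ_iff.mp hk), mul_assoc, ← mul_pow]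
      simp
    linear_combination r ^ k / k.factorial * Ring.choose (n + a) (n - k) * hsign
  rw [eval_laguerre, mul_sum, sum_congr rfl term_eq]
  refine sum_pos' (fun k _ => ?_) ⟨0, by simp, ?_⟩
  · have := choose_pos k
    positivity
  · simpa using choose_pos 0

end Ordered

section Complex

open scoped ComplexConjugate

theorem mul_im_mul_conj_of_three_term {b c e : ℝ} {z u v w : ℂ}
    (h : c * u = (b - z) * v - e * w) :
    c * (u * conj v).im = -z.im * Complex.normSq v + e * (v * conj w).im := by
  have hre := congrArg Complex.re h
  have him := congrArg Complex.im h
  simp only [Complex.mul_re, Complex.mul_im, Complex.sub_re, Complex.sub_im, Complex.ofReal_re,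
    Complex.ofReal_im, Complex.conj_re, Complex.conj_im, Complex.normSq_apply] at hre him ⊢
  linear_combination v.re * him - v.im * hre

theorem im_mul_im_laguerre_succ_mul_conj_neg {a : ℝ} (ha : -1 < a) {z : ℂ} (hz : z.im ≠ 0)
    (n : ℕ) :
    z.im * ((laguerre (a : ℂ) (n + 1)).eval z * conj ((laguerre (a : ℂ) n).eval z)).im < 0 := by
  induction n with
  | zero =>
    simp [laguerre_zero, laguerre_one, hz]
  | succ n ih =>
    have recur : ((n + 2 : ℝ) : ℂ) * (laguerre (a : ℂ) (n + 2)).eval z =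
        ((2 * n + 3 + a : ℝ) - z) * (laguerre (a : ℂ) (n + 1)).eval z
          - ((n + 1 + a : ℝ) : ℂ) * (laguerre (a : ℂ) n).eval z := by
      simpa using congrArg (eval z) (laguerre_three_term (a : ℂ) n)
    have recur_im := mul_im_mul_conj_of_three_term recur
    have hcoeff : 0 < n + 1 + a := by linarith [(n.cast_nonneg : (0 : ℝ) ≤ n)]
    have hsq : 0 ≤ z.im ^ 2 * Complex.normSq ((laguerre (a : ℂ) (n + 1)).eval z) :=
      mul_nonneg (sq_nonneg _) (Complex.normSq_nonneg _)
    have hprev := mul_neg_of_pos_of_neg hcoeff ih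
    refine neg_of_mul_neg_right (a := (n + 2 : ℝ)) ?_ (by positivity)
    linear_combination z.im * recur_im + hprev + hsq

theorem im_eq_zero_of_laguerre_eval_eq_zero {a : ℝ} (ha : -1 < a) {n : ℕ} {z : ℂ}
    (hroot : (laguerre (a : ℂ) n).eval z = 0) : z.im = 0 := by
  by_contra hz
  cases n with
  | zero => simp [laguerre_zero] at hroot
  | succ n => simpa [hroot] using im_mul_im_laguerre_succ_mul_conj_neg ha hz n

theorem laguerre_eval_ofReal (a r : ℝ) (n : ℕ) :
    (laguerre (a : ℂ) n).eval (r : ℂ) = ((laguerre a n).eval r : ℝ) := by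
  have h := eval_map_apply (f := Complex.ofRealHom) (p := laguerre a n) r
  rwa [map_laguerre] at h

theorem laguerre_eval_ofReal_ne_zero_of_nonpos {a : ℝ} (ha : -1 < a) (n : ℕ) {r : ℝ}
    (hr : r ≤ 0) : (laguerre (a : ℂ) n).eval (r : ℂ) ≠ 0 := by
  rw [laguerre_eval_ofReal, Complex.ofReal_ne_zero]
  exact (laguerre_eval_pos_of_nonpos ha n hr).ne'

theorem laguerre_eval_ofReal_ne_zero_of_nonneg {a : ℝ} {n : ℕ} (ha : n + a < 0) {r : ℝ}
    (hr : 0 ≤ r) : (laguerre (a : ℂ) n).eval (r : ℂ) ≠ 0 := by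
  rw [laguerre_eval_ofReal, Complex.ofReal_ne_zero]
  exact right_ne_zero_of_mul (neg_one_pow_mul_laguerre_eval_pos ha hr).ne'

theorem isCoprime_laguerre {a b : ℝ} {m d : ℕ} (ha : m + a < 0) (hb : -1 < b) :
    IsCoprime (laguerre (a : ℂ) m) (laguerre (b : ℂ) d) := by
  refine isCoprime_of_forall_root_eval_ne_zero fun z hz hz' => ?_
  obtain ⟨r, rfl⟩ : ∃ r : ℝ, (r : ℂ) = z :=
    ⟨z.re, Complex.ext rfl (im_eq_zero_of_laguerre_eval_eq_zero hb hz').symm⟩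
  rcases le_total r 0 with hr | hr
  · exact laguerre_eval_ofReal_ne_zero_of_nonpos hb d hr hz'
  · exact laguerre_eval_ofReal_ne_zero_of_nonneg ha hr hz

theorem separable_laguerre_mul_laguerre {a b : ℝ} {m d : ℕ} (ha : m + a < 0) (hb : -1 < b) :
    (laguerre (a : ℂ) m * laguerre (b : ℂ) d).Separable := by
  refine Separable.mul (separable_laguerre ?_) (separable_laguerre ?_) (isCoprime_laguerre ha hb)
  · exact_mod_cast laguerre_eval_ofReal_ne_zero_of_nonneg ha le_rfl
  · exact_mod_cast laguerre_eval_ofReal_ne_zero_of_nonpos hb d le_rfl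

end Complex

end LocationOfZeros

end Laguerre

section Exceptional

open Polynomial

variable {K : Type*} [Field K] [CharZero K]

/-- The type II exceptional Laguerre polynomial `L^{II,(α)}_{m,m+d}` as a formal polynomial, in
Wronskian form: `x W(q, p) - (α + 1) p q` with `p = L_m^{(-α-1)}` and `q = L_d^{(α+1)}`. -/
noncomputable def xLaguerreII (m : ℕ) (α : K) (d : ℕ) : K[X] :=
  X * (derivative (laguerre (-α - 1) m) * laguerre (α + 1) d
    - laguerre (-α - 1) m * derivative (laguerre (α + 1) d))
  - C (α + 1) * (laguerre (-α - 1) m * laguerre (α + 1) d)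

theorem xLaguerreII_sub_derivative (m : ℕ) (α : K) (d : ℕ) :
    xLaguerreII m α d - derivative (xLaguerreII m α d) =
      C (-(α + d + 1 - m)) * (laguerre (-α - 1) m * laguerre (α + 1) d) := by
  have ode_p := laguerre_ode (-α - 1) m
  have ode_q := laguerre_ode (α + 1) d
  simp only [xLaguerreII, derivative_sub, derivative_add, derivative_mul, derivative_X,
    derivative_C, derivative_one, C_neg, C_sub, C_add, C_1] at ode_p ode_q ⊢
  linear_combination laguerre (-α - 1) m * ode_q - laguerre (α + 1) d * ode_p

theorem sumIDeriv_sub_derivative {R : Type*} [CommRing R] (p : R[X]) :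
    sumIDeriv (p - derivative p) = p := by
  rw [map_sub, sumIDeriv_derivative, sub_eq_iff_eq_add]
  exact sumIDeriv_eq_self_add p

theorem xLaguerreII_eq_sumIDeriv (m : ℕ) (α : K) (d : ℕ) :
    xLaguerreII m α d =
      C (-(α + d + 1 - m)) * sumIDeriv (laguerre (-α - 1) m * laguerre (α + 1) d) := by
  rw [← smul_eq_C_mul, ← map_smul, smul_eq_C_mul, ← xLaguerreII_sub_derivative,
    sumIDeriv_sub_derivative]

theorem laguerreC_add_one_natCast_sub_one (a : ℝ) (d : ℕ) (x : ℂ) :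
    laguerreC (a + 1) (d - 1) x = -(derivative (laguerre (a : ℂ) d)).eval x := by
  cases d with
  | zero => simp [laguerreC, laguerre_zero]
  | succ d =>
    rw [derivative_laguerre_succ, Nat.cast_succ, add_sub_cancel_right, laguerreC_natCast]
    simp

theorem XLagIIC_add_eq_eval (m : ℕ) (α : ℝ) (d : ℕ) (x : ℂ) :
    XLagIIC m α (m + d) x = (xLaguerreII m (α : ℂ) d).eval x := by
  have hd : ((m + d : ℕ) : ℤ) - m = d := by push_cast; ring
  have lower := congrArg (eval x) (add_mul_laguerre_sub_one (-α - 1 : ℂ) m)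
  rw [XLagIIC, hd, show α + 2 = α + 1 + 1 by ring, laguerreC_add_one_natCast_sub_one,
    laguerreC_natCast, laguerreC_natCast, laguerreC_natCast]
  simp only [xLaguerreII, eval_add, eval_sub, eval_mul, eval_C, eval_X, Complex.ofReal_add,
    Complex.ofReal_sub, Complex.ofReal_neg, Complex.ofReal_one, Complex.ofReal_ofNat] at lower ⊢
  rw [show (-α - 1 - 1 : ℂ) = -α - 2 by ring] at lower
  linear_combination (laguerre (α + 1 : ℂ) d).eval x * lower

theorem XLagIIC_eq_mul_eval_sumIDeriv {m n : ℕ} (hmn : m ≤ n) {α : ℝ} {c : ℂ} {P : ℂ[X]}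
    (h : laguerre (-α - 1 : ℂ) m * laguerre (α + 1 : ℂ) (n - m) = C c * P) (x : ℂ) :
    XLagIIC m α n x = -(α + n + 1 - 2 * m) * c * (sumIDeriv P).eval x := by
  obtain ⟨d, rfl⟩ := Nat.exists_eq_add_of_le hmn
  rw [Nat.add_sub_cancel_left] at h
  rw [XLagIIC_add_eq_eval, xLaguerreII_eq_sumIDeriv, h, ← smul_eq_C_mul c, map_smul, eval_C_mul,
    eval_smul, smul_eq_mul]
  push_cast
  ring

theorem eval_sumIDeriv_X_pow (k : ℕ) (x : ℂ) :
    (sumIDeriv (X ^ k : ℂ[X])).eval x = k.factorial * expPartial k x := by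
  induction k with
  | zero => simp [expPartial, sumIDeriv_apply]
  | succ k ih =>
    have hfact : (k.factorial : ℂ) ≠ 0 := Nat.cast_ne_zero.mpr k.factorial_ne_zero
    have hk : (k : ℂ) + 1 ≠ 0 := Nat.cast_add_one_ne_zero k
    have hsucc : expPartial (k + 1) x = expPartial k x + x ^ (k + 1) / (k + 1).factorial :=
      sum_range_succ _ _
    rw [sumIDeriv_eq_self_add, ← sumIDeriv_derivative, derivative_X_pow, ← smul_eq_C_mul, map_smul,
      eval_add, eval_smul, Nat.add_sub_cancel, ih, hsucc, Nat.factorial_succ]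
    simp only [eval_pow, eval_X, smul_eq_mul]
    push_cast
    field_simp
    ring

end Exceptional

section BorderedVandermonde

open Polynomial Matrix

variable {R : Type*} [CommRing R]

theorem sum_coeff_smul_apply_X_pow {p : R[X]} {n : ℕ} (hp : p.natDegree < n)
    (φ : R[X] →ₗ[R] R) : ∑ k : Fin n, p.coeff k • φ (X ^ (k : ℕ)) = φ p := by
  conv_rhs => rw [p.as_sum_range' n hp, ← Fin.sum_univ_eq_sum_range]
  simp only [map_sum, ← C_mul_X_pow_eq_monomial, ← smul_eq_C_mul, map_smul]

theorem det_eq_mul_det_submatrix_of_last_col {n : ℕ} (A : Matrix (Fin (n + 1)) (Fin (n + 1)) R)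
    (hA : ∀ i : Fin n, A i.castSucc (Fin.last n) = 0) :
    A.det = A (Fin.last n) (Fin.last n) * (A.submatrix Fin.castSucc Fin.castSucc).det := by
  rw [det_succ_column A (Fin.last n), Fin.sum_univ_castSucc]
  simp [hA, Fin.succAbove_last, ← two_mul]

theorem det_eq_prod_mul_apply_prod_X_sub_C {n : ℕ} (Y : Fin n → R) (φ : R[X] →ₗ[R] R)
    (A : Matrix (Fin (n + 1)) (Fin (n + 1)) R)
    (hA : ∀ (i : Fin n) k, A i.castSucc k = Y i ^ (k : ℕ))
    (hAlast : ∀ k, A (Fin.last n) k = φ (X ^ (k : ℕ))) :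
    A.det = (∏ i, ∏ j ∈ Ioi i, (Y j - Y i)) * φ (∏ j, (X - C (Y j))) := by
  nontriviality R
  set P : R[X] := ∏ j, (X - C (Y j)) with hP
  have hmonic : P.Monic := monic_prod_of_monic _ _ fun j _ => monic_X_sub_C (Y j)
  have hdeg : P.natDegree = n := by simp [hP]
  have hlead : P.coeff (Fin.last n) = 1 := by
    rw [Fin.val_last, ← hdeg, hmonic.coeff_natDegree]
  let B := A.updateCol (Fin.last n) fun i => ∑ k : Fin (n + 1), P.coeff k • A i k
  have hBapply {i} {ψ : R[X] →ₗ[R] R} (hψ : ∀ k, A i k = ψ (X ^ (k : ℕ))) :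
      B i (Fin.last n) = ψ P := by
    simp only [B, updateCol_self, hψ]
    exact sum_coeff_smul_apply_X_pow (hdeg.trans_lt n.lt_succ_self) ψ
  have hBlast : B (Fin.last n) (Fin.last n) = φ P := hBapply hAlast
  have hBroot (i : Fin n) : B i.castSucc (Fin.last n) = 0 := by
    rw [hBapply (ψ := leval (Y i)) (by simp [hA]), leval_apply, hP, eval_prod]
    exact prod_eq_zero (mem_univ i) (by simp)
  have hBsub : B.submatrix Fin.castSucc Fin.castSucc = vandermonde Y := by
    ext i k
    simp [B, hA, vandermonde_apply]
  calc
    A.det = B.det := by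
      rw [det_updateCol_sum A (Fin.last n) fun k => P.coeff k, hlead, one_smul]
    _ = φ P * (vandermonde Y).det := by
      rw [det_eq_mul_det_submatrix_of_last_col B hBroot, hBlast, hBsub]
    _ = _ := by rw [det_vandermonde, mul_comm]

end BorderedVandermonde

section Factorization

open Polynomial

theorem eq_C_mul_prod_X_sub_C {R ι : Type*} [CommRing R] [IsDomain R] [Infinite R] [Fintype ι]
    {p : R[X]} {c : R} {y : ι → R} (h : ∀ x, p.eval x = c * ∏ j, (x - y j)) :
    p = C c * ∏ j, (X - C (y j)) :=
  Polynomial.funext fun x => by simp [h, eval_prod]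

theorem prod_append_cast {A N : Type*} [CommMonoid N] (f : A → N) {m d n : ℕ} (h : n = m + d)
    (y : Fin m → A) (z : Fin d → A) :
    ∏ j, f (Fin.append y z (Fin.cast h j)) = (∏ i, f (y i)) * ∏ i, f (z i) := by
  rw [Fin.prod_congr' (fun j => f (Fin.append y z j)) h, Fin.prod_univ_add]
  simp only [Fin.append_left, Fin.append_right]

theorem laguerre_mul_laguerre_eq_C_mul_prod {a b : ℝ} {m d n : ℕ} (h : n = m + d)
    {y : Fin m → ℂ} {z : Fin d → ℂ}
    (hy : ∀ x, laguerreC a m x = (-1) ^ m / m.factorial * ∏ j, (x - y j))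
    (hz : ∀ x, laguerreC b d x = (-1) ^ d / d.factorial * ∏ j, (x - z j)) :
    laguerre (a : ℂ) m * laguerre (b : ℂ) d =
      C ((-1 : ℂ) ^ n / (m.factorial * d.factorial)) *
        ∏ j, (X - C (Fin.append y z (Fin.cast h j))) := by
  simp only [laguerreC_natCast] at hy hz
  rw [eq_C_mul_prod_X_sub_C hy, eq_C_mul_prod_X_sub_C hz, prod_append_cast (fun t => X - C t),
    mul_mul_mul_comm, ← C_mul, div_mul_div_comm, ← pow_add, h]

end Factorization

theorem stmt6_general (m : ℕ) (α : ℝ) (n : ℕ) (hmn : m ≤ n)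
    (y : Fin m → ℂ) (z : Fin (n - m) → ℂ)
    (hy : ∀ X : ℂ, laguerreC (-α - 1) (m : ℤ) X =
      ((-1 : ℂ) ^ m / (Nat.factorial m : ℂ)) * ∏ j, (X - y j))
    (hz : ∀ X : ℂ, laguerreC (α + 1) ((n : ℤ) - m) X =
      ((-1 : ℂ) ^ (n - m) / (Nat.factorial (n - m) : ℂ)) * ∏ j, (X - z j))
    (Y : Fin n → ℂ)
    (hY : Y = fun j => Fin.append y z (Fin.cast (Nat.add_sub_of_le hmn).symm j))
    (M : ℂ → Matrix (Fin (n + 1)) (Fin (n + 1)) ℂ)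
    (hM : ∀ w : ℂ, M w = Matrix.of fun (i k : Fin (n + 1)) =>
      if h : (i : ℕ) < n then (Y ⟨i, h⟩) ^ (k : ℕ)
      else (Nat.factorial (k : ℕ) : ℂ) * expPartial (k : ℕ) w) :
    (∀ w : ℂ,
      (Nat.factorial m : ℂ) * (Nat.factorial (n - m) : ℂ) *
          (∏ i : Fin n, ∏ j ∈ Finset.Ioi i, (Y j - Y i)) * XLagIIC m α n w =
        (-1 : ℂ) ^ (n + 1) * ((α : ℂ) + n + 1 - 2 * m) * (M w).det) ∧
      ((m : ℝ) - 1 < α → Function.Injective Y) := by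
  have hfactor := laguerre_mul_laguerre_eq_C_mul_prod (Nat.add_sub_of_le hmn).symm hy
    (by simpa only [Nat.cast_sub hmn] using hz)
  simp only [← congrFun hY] at hfactor
  constructor
  · intro w
    have hX := XLagIIC_eq_mul_eval_sumIDeriv hmn (by simpa using hfactor) w
    have hdet := det_eq_prod_mul_apply_prod_X_sub_C Y (Polynomial.leval w ∘ₗ Polynomial.sumIDeriv)
      (M w) (by simp [hM]) (by simp [hM, eval_sumIDeriv_X_pow])
    have hm : (m.factorial : ℂ) ≠ 0 := Nat.cast_ne_zero.mpr m.factorial_ne_zero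
    have hd : ((n - m).factorial : ℂ) ≠ 0 := Nat.cast_ne_zero.mpr (n - m).factorial_ne_zero
    rw [hX, hdet, LinearMap.comp_apply, Polynomial.leval_apply]
    field_simp
    ring
  · intro hα
    have hsep := separable_laguerre_mul_laguerre (a := -α - 1) (b := α + 1) (m := m) (d := n - m)
      (by linarith) (by linarith [(Nat.cast_nonneg m : (0 : ℝ) ≤ m)])
    rw [hfactor] at hsep
    exact Polynomial.separable_prod_X_sub_C_iff.mp hsep.of_mul_right

theorem stmt6 (m : ℕ) (α : ℝ) (hα : (m : ℝ) - 1 < α) (n : ℕ) (hmn : m ≤ n)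
    (y : Fin m → ℂ) (z : Fin (n - m) → ℂ)
    (hy : ∀ X : ℂ, laguerreC (-α - 1) (m : ℤ) X =
      ((-1 : ℂ) ^ m / (Nat.factorial m : ℂ)) * ∏ j, (X - y j))
    (hz : ∀ X : ℂ, laguerreC (α + 1) ((n : ℤ) - m) X =
      ((-1 : ℂ) ^ (n - m) / (Nat.factorial (n - m) : ℂ)) * ∏ j, (X - z j))
    (Y : Fin n → ℂ)
    (hY : Y = fun j => Fin.append y z (Fin.cast (show n = m + (n - m) by omega) j))
    (M : ℂ → Matrix (Fin (n + 1)) (Fin (n + 1)) ℂ)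
    (hM : ∀ w : ℂ, M w = Matrix.of fun (i k : Fin (n + 1)) =>
      if h : (i : ℕ) < n then (Y ⟨i, h⟩) ^ (k : ℕ)
      else (Nat.factorial (k : ℕ) : ℂ) * expPartial (k : ℕ) w) :
    (∀ w : ℂ,
      (Nat.factorial m : ℂ) * (Nat.factorial (n - m) : ℂ) *
          (∏ i : Fin n, ∏ j ∈ Finset.Ioi i, (Y j - Y i)) * XLagIIC m α n w =
        (-1 : ℂ) ^ (n + 1) * ((α : ℂ) + n + 1 - 2 * m) * (M w).det) ∧
      Function.Injective Y := by
  obtain ⟨hdet, hinj⟩ := stmt6_general m α n hmn y z hy hz Y hY M hM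
  exact ⟨hdet, hinj hα⟩
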